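/- arXiv:1702.04463 — 4 statements merged into one kernel-verified Lean document; each statement's English description precedes it below -/
import Mathlib

section
/- Let n be a natural number, a : Fin n → ℝ, and τ ≥ 0, and define x̂ⱼ = sgn(aⱼ)·max(|aⱼ| − τ, 0). If x : Fin n → ℝ satisfies (1/2)·∑ⱼ (xⱼ − aⱼ)² + τ·∑ⱼ |xⱼ| ≤ (1/2)·∑ⱼ (x̂ⱼ − aⱼ)² + τ·∑ⱼ |x̂ⱼ|, then x = x̂; that is, the soft-thresholding vector is the unique global minimizer of x ↦ (1/2)‖x − a‖₂² + τ‖x‖₁. (Uniqueness part of the closed-form solution in Lemma 1.) -/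
open Finset

/-!
Put `f y = (1/2) (y - a)² + τ |y|`. In each coordinate the soft threshold `s` satisfies the
optimality condition `a - s ∈ τ ∂|·|(s)`, so the 1-strong convexity of `f` yields the quadratic
growth bound `f s + (1/2) (y - s)² ≤ f y` (`soft_threshold_quadratic_growth`). Summing over the
coordinates, a vector `x` whose objective does not exceed that of `xhat` has
`∑ j, (x j - xhat j)² ≤ 0`, so it equals `xhat`.
-/

/-- Quadratic growth of the scalar objective at the soft threshold. After expanding the squares
it reads `(a - s) (y - s) ≤ τ (|y| - |s|)`, the subgradient inequality for `τ |·|` at `s`. -/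
lemma soft_threshold_quadratic_growth (a τ s y : ℝ) (hτ : 0 ≤ τ)
    (hs : s = Real.sign a * max (|a| - τ) 0) :
    (1/2) * (s - a)^2 + τ * |s| + (1/2) * (y - s)^2 ≤ (1/2) * (y - a)^2 + τ * |y| := by
  suffices h : (a - s) * (y - s) ≤ τ * (|y| - |s|) by nlinarith
  rcases le_total |a| τ with h | h
  · have hs0 : s = 0 := by rw [hs, max_eq_right (by linarith), mul_zero]
    have h1 : a * y ≤ |a| * |y| := (le_abs_self _).trans_eq (abs_mul a y)
    have h2 : |a| * |y| ≤ τ * |y| := mul_le_mul_of_nonneg_right h (abs_nonneg y)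
    simpa [hs0] using h1.trans h2
  · rw [max_eq_left (by linarith)] at hs
    rcases lt_trichotomy a 0 with ha | ha | ha
    · rw [Real.sign_of_neg ha, abs_of_neg ha] at hs
      rw [abs_of_neg ha] at h
      have hs' : |s| = -s := abs_of_nonpos (by linarith)
      have has : a - s = -τ := by linarith
      rw [hs', has]
      nlinarith [mul_le_mul_of_nonneg_left (neg_le_abs y) hτ]
    · -- Here `τ ≤ |a| = 0`, so both sides vanish.
      have hτ0 : τ = 0 := le_antisymm (by simpa [ha] using h) hτ
      simp [hs, ha, hτ0]
    · rw [Real.sign_of_pos ha, abs_of_pos ha] at hs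
      rw [abs_of_pos ha] at h
      have hs' : |s| = s := abs_of_nonneg (by linarith)
      have has : a - s = τ := by linarith
      rw [hs', has]
      nlinarith [mul_le_mul_of_nonneg_left (le_abs_self y) hτ]

/-- Uniqueness part of Lemma 1: the soft-thresholding vector is the unique global
minimizer of `x ↦ (1/2)‖x − a‖₂² + τ‖x‖₁`. -/
theorem soft_threshold_vector_unique_min (n : ℕ) (a : Fin n → ℝ) (τ : ℝ) (hτ : 0 ≤ τ)
    (xhat : Fin n → ℝ) (hxhat : ∀ j, xhat j = Real.sign (a j) * max (|a j| - τ) 0)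
    (x : Fin n → ℝ)
    (hx : (1/2) * (∑ j, (x j - a j)^2) + τ * (∑ j, |x j|)
        ≤ (1/2) * (∑ j, (xhat j - a j)^2) + τ * (∑ j, |xhat j|)) :
    x = xhat := by
  have hsum := Finset.sum_le_sum fun j (_ : j ∈ Finset.univ) =>
    soft_threshold_quadratic_growth (a j) τ (xhat j) (x j) hτ (hxhat j)
  simp only [Finset.sum_add_distrib, ← Finset.mul_sum] at hsum
  have hzero : ∑ j, (x j - xhat j)^2 = 0 :=
    le_antisymm (by linarith) (Finset.sum_nonneg fun j _ => sq_nonneg _)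
  rw [Finset.sum_eq_zero_iff_of_nonneg fun j _ => sq_nonneg _] at hzero
  funext j
  exact sub_eq_zero.mp (pow_eq_zero_iff two_ne_zero |>.mp (hzero j (Finset.mem_univ j)))
end

section
/- Let n be a natural number and a, w : Fin n → ℝ satisfy a₁ ≥ a₂ ≥ … ≥ aₙ ≥ 0 (a is nonincreasing and nonnegative) and 0 ≤ w₁ ≤ w₂ ≤ … ≤ wₙ (w is nonnegative and nondecreasing). Define x̂ᵢ = max(aᵢ − wᵢ, 0). Then for every x : Fin n → ℝ with xᵢ ≥ 0 for all i, one has ∑ᵢ [(1/2)(x̂ᵢ − aᵢ)² + wᵢ·x̂ᵢ] ≤ ∑ᵢ [(1/2)(xᵢ − aᵢ)² + wᵢ·xᵢ]; that is, x̂ is a global optimum of the problem min_{x ≥ 0} ∑ᵢ (1/2)(xᵢ − aᵢ)² + wᵢ xᵢ. (Lemma 2.) -/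
open Finset

/-- Lemma 2: if `a` is nonincreasing and nonnegative and the weights `w` are
nonnegative and nondecreasing, then `x̂ᵢ = max (aᵢ - wᵢ) 0` is a global optimum of
`min_{x ≥ 0} ∑ᵢ (1/2)(xᵢ − aᵢ)² + wᵢ xᵢ`. -/
theorem weighted_nonneg_shrinkage_global_min (n : ℕ) (a w : Fin n → ℝ)
    (ha_anti : Antitone a) (ha_nonneg : ∀ i, 0 ≤ a i)
    (hw_mono : Monotone w) (hw_nonneg : ∀ i, 0 ≤ w i)
    (xhat : Fin n → ℝ) (hxhat : ∀ i, xhat i = max (a i - w i) 0) :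
    ∀ x : Fin n → ℝ, (∀ i, 0 ≤ x i) →
      ∑ i, ((1/2) * (xhat i - a i)^2 + w i * xhat i)
        ≤ ∑ i, ((1/2) * (x i - a i)^2 + w i * x i) := by
  intro x hx
  refine Finset.sum_le_sum fun i _ => ?_
  -- Up to a constant, each summand is `(1/2) * (xᵢ - (aᵢ - wᵢ))^2`, so the constrained minimizer
  -- is the projection of `aᵢ - wᵢ` onto the half-line `[0, ∞)`.
  rw [hxhat i]
  rcases le_total (a i - w i) 0 with h | h
  · rw [max_eq_right h]
    nlinarith [mul_nonneg (hx i) (sub_nonneg.2 h), sq_nonneg (x i)]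
  · rw [max_eq_left h]
    nlinarith [sq_nonneg (x i - (a i - w i))]
end

section
/- Let m, k, n be natural numbers, let u : Fin n → ℝ^m and v : Fin n → ℝ^k be orthonormal families, let δ : Fin n → ℝ be nonincreasing with δⱼ ≥ 0, let Y = ∑ⱼ δⱼ · (uⱼ vⱼᵀ), and let w : Fin n → ℝ be nonnegative and nondecreasing. Define α̂ⱼ = max(δⱼ − wⱼ, 0) and X̂ = ∑ⱼ α̂ⱼ · (uⱼ vⱼᵀ). Then α̂ is a global minimizer of the weighted ℓ1 group sparse coding objective under the adaptive dictionary with atoms dⱼ = uⱼ vⱼᵀ: for every α : Fin n → ℝ, (1/2)‖Y − X̂‖_F² + ∑ⱼ wⱼ·|α̂ⱼ| ≤ (1/2)‖Y − ∑ⱼ αⱼ·(uⱼ vⱼᵀ)‖_F² + ∑ⱼ wⱼ·|αⱼ|; moreover X̂ equals the generalized singular value soft-thresholding of Y by the weights w, so the weighted ℓ1-norm minimization based on group sparse representation recovers the WNNM solution. (Corollary 1.) -/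
/-!
The atoms `uⱼ vⱼᵀ` are orthonormal for the Frobenius inner product, because
`⟪uⱼ vⱼᵀ, uₚ vₚᵀ⟫ = ⟪uⱼ, uₚ⟫ ⟪vⱼ, vₚ⟫`. By Pythagoras (`frobSq_sum_smul_vecMulVec`) the objective at `α`
therefore separates into `∑ⱼ ((δⱼ - αⱼ)² / 2 + wⱼ |αⱼ|)`, and each summand is minimized by
soft-thresholding `δⱼ` at level `wⱼ` (`softThreshold_le`).
-/

open Finset Matrix

/-- Squared Frobenius norm of a real matrix: the sum of squares of its entries. -/
def frobSq {m k : ℕ} (M : Matrix (Fin m) (Fin k) ℝ) : ℝ := ∑ i, ∑ l, (M i l)^2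

/-- Coordinate form of orthonormality. -/
lemma sum_mul_of_orthonormal {m n : ℕ} {u : Fin n → EuclideanSpace ℝ (Fin m)}
    (hu : Orthonormal ℝ u) (j p : Fin n) :
    ∑ i, u j i * u p i = if j = p then 1 else 0 := by
  rw [← orthonormal_iff_ite.mp hu j p, PiLp.inner_apply]
  exact Finset.sum_congr rfl fun i _ => by simp [mul_comm]

/-- Pythagoras for the Frobenius norm: the atoms `uⱼ vⱼᵀ` form an orthonormal family. -/
lemma frobSq_sum_smul_vecMulVec {m k n : ℕ}
    {u : Fin n → EuclideanSpace ℝ (Fin m)} {v : Fin n → EuclideanSpace ℝ (Fin k)}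
    (hu : Orthonormal ℝ u) (hv : Orthonormal ℝ v) (c : Fin n → ℝ) :
    frobSq (∑ j, c j • Matrix.vecMulVec (u j) (v j)) = ∑ j, c j ^ 2 := by
  calc frobSq (∑ j, c j • Matrix.vecMulVec (u j) (v j))
      = ∑ i, ∑ l, ∑ j, ∑ p, c j * c p * ((u j i * u p i) * (v j l * v p l)) := by
        unfold frobSq
        refine Finset.sum_congr rfl fun i _ => Finset.sum_congr rfl fun l _ => ?_
        rw [Matrix.sum_apply, sq, Finset.sum_mul_sum]
        refine Finset.sum_congr rfl fun j _ => Finset.sum_congr rfl fun p _ => ?_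
        simp only [Matrix.smul_apply, Matrix.vecMulVec_apply, smul_eq_mul]
        ring
    _ = ∑ i, ∑ j, ∑ p, ∑ l, c j * c p * ((u j i * u p i) * (v j l * v p l)) := by
        refine Finset.sum_congr rfl fun i _ => ?_
        rw [Finset.sum_comm]
        exact Finset.sum_congr rfl fun j _ => Finset.sum_comm
    _ = ∑ j, ∑ p, ∑ i, ∑ l, c j * c p * ((u j i * u p i) * (v j l * v p l)) := by
        rw [Finset.sum_comm]
        exact Finset.sum_congr rfl fun j _ => Finset.sum_comm
    _ = ∑ j, ∑ p, c j * c p * ((∑ i, u j i * u p i) * ∑ l, v j l * v p l) := by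
        refine Finset.sum_congr rfl fun j _ => Finset.sum_congr rfl fun p _ => ?_
        rw [Finset.sum_mul_sum]
        simp only [Finset.mul_sum]
    _ = ∑ j, c j ^ 2 := by
        simp [sum_mul_of_orthonormal hu, sum_mul_of_orthonormal hv, sq]

/-- Soft-thresholding is the proximal map of `w |·|`, at a nonnegative point `d`. -/
lemma softThreshold_le {d w : ℝ} (hd : 0 ≤ d) (hw : 0 ≤ w) (a : ℝ) :
    (1/2) * (d - max (d - w) 0) ^ 2 + w * |max (d - w) 0|
      ≤ (1/2) * (d - a) ^ 2 + w * |a| := by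
  have hwa : w * a ≤ w * |a| := mul_le_mul_of_nonneg_left (le_abs_self a) hw
  rw [abs_of_nonneg (le_max_right _ _)]
  rcases le_total w d with h | h
  · rw [max_eq_left (sub_nonneg.mpr h)]
    -- The difference of the two sides is at least `(a - (d - w))² / 2`.
    nlinarith [sq_nonneg (a - (d - w))]
  · rw [max_eq_right (sub_nonpos.mpr h)]
    have hda : d * a ≤ w * |a| :=
      (mul_le_mul_of_nonneg_left (le_abs_self a) hd).trans
        (mul_le_mul_of_nonneg_right h (abs_nonneg a))
    nlinarith [sq_nonneg a]

/-- Corollary 1: with `α̂ⱼ = max (δⱼ − wⱼ) 0`, the matrix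
`X̂ = ∑ⱼ α̂ⱼ uⱼ vⱼᵀ` (the generalized singular value soft-thresholding of
`Y = ∑ⱼ δⱼ uⱼ vⱼᵀ` by the weights `w`) realizes a global minimum of the weighted
ℓ1 group sparse coding objective under the adaptive dictionary with atoms
`dⱼ = uⱼ vⱼᵀ`: for every coefficient vector `α`,
`(1/2)‖Y − X̂‖_F² + ∑ⱼ wⱼ|α̂ⱼ| ≤ (1/2)‖Y − ∑ⱼ αⱼ uⱼ vⱼᵀ‖_F² + ∑ⱼ wⱼ|αⱼ|`. -/
theorem wnnm_equiv_weighted_l1_group_sparse (m k n : ℕ)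
    (u : Fin n → EuclideanSpace ℝ (Fin m)) (v : Fin n → EuclideanSpace ℝ (Fin k))
    (hu : Orthonormal ℝ u) (hv : Orthonormal ℝ v)
    (δ : Fin n → ℝ) (hδ_anti : Antitone δ) (hδ : ∀ j, 0 ≤ δ j)
    (Y : Matrix (Fin m) (Fin k) ℝ)
    (hY : Y = ∑ j, δ j • Matrix.vecMulVec (u j) (v j))
    (w : Fin n → ℝ) (hw_mono : Monotone w) (hw : ∀ j, 0 ≤ w j)
    (αhat : Fin n → ℝ) (hαhat : ∀ j, αhat j = max (δ j - w j) 0)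
    (Xhat : Matrix (Fin m) (Fin k) ℝ)
    (hXhat : Xhat = ∑ j, αhat j • Matrix.vecMulVec (u j) (v j)) :
    ∀ α : Fin n → ℝ,
      (1/2) * frobSq (Y - Xhat) + ∑ j, w j * |αhat j|
        ≤ (1/2) * frobSq (Y - ∑ j, α j • Matrix.vecMulVec (u j) (v j))
            + ∑ j, w j * |α j| := by
  intro α
  have key : ∀ β : Fin n → ℝ,
      (1/2) * frobSq (Y - ∑ j, β j • Matrix.vecMulVec (u j) (v j)) + ∑ j, w j * |β j|
        = ∑ j, ((1/2) * (δ j - β j) ^ 2 + w j * |β j|) := by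
    intro β
    rw [hY, ← Finset.sum_sub_distrib]
    simp only [← sub_smul]
    rw [frobSq_sum_smul_vecMulVec hu hv fun j => δ j - β j, Finset.mul_sum,
      Finset.sum_add_distrib]
  rw [hXhat, key, key]
  refine Finset.sum_le_sum fun j _ => ?_
  rw [hαhat j]
  exact softThreshold_le (hδ j) (hw j) (α j)
end

section
/- Let m, n be natural numbers, let Φ be a real m × n matrix, y ∈ ℝ^m, λ ≥ 0, and ε > 0. Define the log-penalized objective F(x) = (1/2)‖y − Φx‖₂² + λ·∑ⱼ log(|xⱼ| + ε) for x : Fin n → ℝ. Fix x⁽ᵗ⁾ : Fin n → ℝ and define the reweighted ℓ1 surrogate H(x) = (1/2)‖y − Φx‖₂² + λ·∑ⱼ |xⱼ|/(|x⁽ᵗ⁾ⱼ| + ε). If x⁽ᵗ⁺¹⁾ : Fin n → ℝ satisfies H(x⁽ᵗ⁺¹⁾) ≤ H(x) for all x (in particular H(x⁽ᵗ⁺¹⁾) ≤ H(x⁽ᵗ⁾)), then F(x⁽ᵗ⁺¹⁾) ≤ F(x⁽ᵗ⁾); that is, each iteration of the weighted ℓ1-norm minimization with weights wⱼ = 1/(|x⁽ᵗ⁾ⱼ|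 + ε) does not increase the log-penalized sparse representation objective. (The majorization–minimization descent argument, Eqs. (5)–(8), establishing Proposition 1.) -/
/-!
The argument is majorization–minimization. Concavity of the logarithm bounds `log (|x| + ε)` above
by its tangent line in `|x|` at `|xₜ|` (`log_abs_add_sub_le`). Summing over the coordinates with
weight `lam ≥ 0` and adding the common quadratic term gives `F x - F xt ≤ H x - H xt` for every `x`;
at `x = xt1` the right-hand side is nonpositive, by minimality.
-/

open Finset Matrix

/-- The tangent-line bound for `t ↦ log (t + ε)` at `t = |b|`, evaluated at `t = |a|`. -/
lemma log_abs_add_sub_le {ε : ℝ} (hε : 0 < ε) (a b : ℝ) :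
    Real.log (|a| + ε) - Real.log (|b| + ε) ≤ |a| / (|b| + ε) - |b| / (|b| + ε) := by
  have ha : 0 < |a| + ε := by positivity
  have hb : 0 < |b| + ε := by positivity
  rw [← Real.log_div ha.ne' hb.ne']
  calc Real.log ((|a| + ε) / (|b| + ε))
      ≤ (|a| + ε) / (|b| + ε) - 1 := Real.log_le_sub_one_of_pos (div_pos ha hb)
    _ = |a| / (|b| + ε) - |b| / (|b| + ε) := by
      field_simp
      ring

/-- The majorization–minimization descent argument (Eqs. (5)–(8)) establishing
Proposition 1: if `x⁽ᵗ⁺¹⁾` globally minimizes the reweighted ℓ1 surrogate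
`H(x) = (1/2)‖y − Φx‖₂² + λ ∑ⱼ |xⱼ|/(|x⁽ᵗ⁾ⱼ| + ε)`, then the log-penalized
objective `F(x) = (1/2)‖y − Φx‖₂² + λ ∑ⱼ log (|xⱼ| + ε)` does not increase:
`F(x⁽ᵗ⁺¹⁾) ≤ F(x⁽ᵗ⁾)`. -/
theorem reweighted_l1_descends_log_objective (m n : ℕ)
    (Φ : Matrix (Fin m) (Fin n) ℝ) (y : Fin m → ℝ)
    (lam ε : ℝ) (hlam : 0 ≤ lam) (hε : 0 < ε)
    (xt xt1 : Fin n → ℝ)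
    (F H : (Fin n → ℝ) → ℝ)
    (hF : ∀ x, F x = (1/2) * (∑ i, (y i - (Φ *ᵥ x) i)^2)
        + lam * ∑ j, Real.log (|x j| + ε))
    (hH : ∀ x, H x = (1/2) * (∑ i, (y i - (Φ *ᵥ x) i)^2)
        + lam * ∑ j, |x j| / (|xt j| + ε))
    (hmin : ∀ x, H xt1 ≤ H x) :
    F xt1 ≤ F xt := by
  have hsum := Finset.sum_le_sum
    fun j (_ : j ∈ Finset.univ) => log_abs_add_sub_le hε (xt1 j) (xt j)
  rw [Finset.sum_sub_distrib, Finset.sum_sub_distrib] at hsum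
  have hmaj := mul_le_mul_of_nonneg_left hsum hlam
  rw [mul_sub, mul_sub] at hmaj
  have hdesc := hmin xt
  rw [hH, hH] at hdesc
  rw [hF, hF]
  linarith
end
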